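/- Let r ∈ ℝ, T > 0, p > 4, R > 0, N ≥ 1, and let σ : [0,∞)×ℝ → ℝ be measurable with |σ(x,u)| ≤ R(e^{rx}+|u|) for all x ≥ 0, u ∈ ℝ. Let u : [0,T]×[0,∞) → ℝ be continuous with ‖u‖_{C_r^T} < ∞, let h ∈ L²([0,T]×[0,∞)) with ∫_0^T∫_0^∞ h(s,y)² dy ds ≤ N², and define F(t,x) := ∫_0^t ∫_0^∞ G(t−s,x,y) σ(y,u(s,y)) h(s,y) dy ds. Then there exists a constant C = C(r,p,T) > 0 such that for all s ∈ [0,T] and all x, y ≥ 0, | e^{−ry} F(s,y) − e^{−rx} F(s,x) |^p ≤ C R^p N^p T ( 1 + ‖u‖_{C_r^T} )^p |x−y|^{(p−4)/2}. -/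

import Mathlib

/-!
The weight `e^{-rx}` is absorbed into the kernel: `e^{-rx} F(s, x)` is the integral of `Gr r`
against `e^{-rz} σ(z, u) h`, whose `L²` norm is at most `R (1 + ‖u‖) N`. By Cauchy–Schwarz,
everything rests on how continuously `Gr r (s - τ) x z`, as an `L²` function of `(τ, z)`, depends
on `x`.

`Gr r t x z` is a tilted Gaussian minus its reflection. The reflection carries the factor
`e^{-r(x-z)}`, which splits into `e^{-2r⁺x}`, `e^{-2r⁻z}` and the tilt `e^{|r|(x+z)}`; the first two
are at most `1` on the half-line, so both signs of `r` are treated at once. Completing the square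
gives the `L²` distance of two translates of a tilted Gaussian in closed form, and
`1 - e^{-v} ≤ v^θ` turns it into `|x - y|^{2θ} t^{-1/2-θ}`. This is integrable in time exactly when
`θ < 1/2`; the theorem is the `p`-th power of the resulting estimate for `θ = (p - 4) / (2p)`.
-/

open MeasureTheory Real Set Filter

/-- Dirichlet heat kernel on `[0,∞)`. -/
noncomputable def G (t x y : ℝ) : ℝ :=
  (Real.sqrt (4 * Real.pi * t))⁻¹ *
    (Real.exp (-(x - y) ^ 2 / (4 * t)) - Real.exp (-(x + y) ^ 2 / (4 * t)))

/-- Exponentially weighted kernel `G_r(t,x,y) = e^{-r(x-y)} G(t,x,y)`. -/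
noncomputable def Gr (r t x y : ℝ) : ℝ := Real.exp (-r * (x - y)) * G t x y

/-- Weighted sup norm `‖v‖_{L_r} = sup_{x ≥ 0} e^{-rx}|v(x)|`. -/
noncomputable def LrNorm (r : ℝ) (v : ℝ → ℝ) : ℝ :=
  sSup ((fun x => Real.exp (-r * x) * |v x|) '' Ici 0)

/-- Weighted sup norm `‖u‖_{C_r^T} = sup_{t ∈ [0,T]} sup_{x ≥ 0} e^{-rx}|u(t,x)|`. -/
noncomputable def CrNorm (r T : ℝ) (u : ℝ → ℝ → ℝ) : ℝ :=
  sSup ((fun q : ℝ × ℝ => Real.exp (-r * q.2) * |u q.1 q.2|) '' (Icc 0 T ×ˢ Ici 0))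

/-- `‖u‖_{C_r^T} < ∞`, expressed as boundedness of the weighted values. -/
def CrBdd (r T : ℝ) (u : ℝ → ℝ → ℝ) : Prop :=
  BddAbove ((fun q : ℝ × ℝ => Real.exp (-r * q.2) * |u q.1 q.2|) '' (Icc 0 T ×ˢ Ici 0))

section Elementary

variable {θ v a b : ℝ}

lemma min_one_le_rpow (hv : 0 ≤ v) (hθ : 0 ≤ θ) (hθ1 : θ ≤ 1) : min 1 v ≤ v ^ θ := by
  rcases le_total v 1 with h | h
  · simpa [h] using Real.rpow_le_rpow_of_exponent_ge' hv h hθ hθ1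
  · simpa [h] using Real.one_le_rpow h hθ

lemma one_sub_exp_neg_le_rpow (hv : 0 ≤ v) (hθ : 0 ≤ θ) (hθ1 : θ ≤ 1) :
    1 - exp (-v) ≤ v ^ θ :=
  (le_min (by linarith [exp_pos (-v)]) (by linarith [one_sub_le_exp_neg v])).trans
    (min_one_le_rpow hv hθ hθ1)

lemma abs_exp_neg_sub_exp_neg_le_rpow (ha : 0 ≤ a) (hb : 0 ≤ b) (hθ : 0 ≤ θ) (hθ1 : θ ≤ 1) :
    |exp (-a) - exp (-b)| ≤ |a - b| ^ θ := by
  wlog hab : a ≤ b generalizing a b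
  · rw [abs_sub_comm, abs_sub_comm a b]
    exact this hb ha (le_of_not_ge hab)
  have hfactor : exp (-a) - exp (-b) = exp (-a) * (1 - exp (-(b - a))) := by
    rw [mul_sub, ← exp_add]; ring_nf
  have hnonneg : 0 ≤ 1 - exp (-(b - a)) := by
    rw [sub_nonneg, exp_le_one_iff]; linarith
  have hle : exp (-a) ≤ 1 := exp_le_one_iff.mpr (by linarith)
  rw [hfactor, abs_of_nonneg (by positivity), abs_sub_comm, abs_of_nonneg (sub_nonneg.mpr hab)]
  exact (mul_le_of_le_one_left hnonneg hle).trans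
    (one_sub_exp_neg_le_rpow (sub_nonneg.mpr hab) hθ hθ1)

end Elementary

section SquareIntegrable

variable {α : Type*} [MeasurableSpace α] {μ : Measure α} {f g : α → ℝ}

lemma sq_integral_mul_le_integral_sq_mul_integral_sq (hf : MemLp f 2 μ) (hg : MemLp g 2 μ) :
    (∫ a, f a * g a ∂μ) ^ 2 ≤ (∫ a, f a ^ 2 ∂μ) * ∫ a, g a ^ 2 ∂μ := by
  have hholder : ∫ a, |f a| * |g a| ∂μ ≤ √(∫ a, f a ^ 2 ∂μ) * √(∫ a, g a ^ 2 ∂μ) := by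
    simpa [sqrt_eq_rpow] using integral_mul_norm_le_Lp_mul_Lq (f := f) (g := g)
      HolderConjugate.two_two (by simpa using hf) (by simpa using hg)
  have habs : |∫ a, f a * g a ∂μ| ≤ ∫ a, |f a| * |g a| ∂μ := by
    simpa only [abs_mul] using abs_integral_le_integral_abs (f := fun a => f a * g a)
  calc (∫ a, f a * g a ∂μ) ^ 2 = |∫ a, f a * g a ∂μ| ^ 2 := (sq_abs _).symm
    _ ≤ (√(∫ a, f a ^ 2 ∂μ) * √(∫ a, g a ^ 2 ∂μ)) ^ 2 := by gcongr; exact habs.trans hholder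
    _ = _ := by
      rw [mul_pow, sq_sqrt (integral_nonneg fun _ => sq_nonneg _),
        sq_sqrt (integral_nonneg fun _ => sq_nonneg _)]

lemma memLp_two_of_lintegral_ofReal_sq_lt_top (hf : AEStronglyMeasurable f μ)
    (hfin : ∫⁻ a, ENNReal.ofReal (f a ^ 2) ∂μ < ⊤) : MemLp f 2 μ :=
  (memLp_two_iff_integrable_sq hf).mpr <|
    (lintegral_ofReal_ne_top_iff_integrable (hf.pow 2) (ae_of_all _ fun _ => sq_nonneg _)).mp
      hfin.ne

lemma integral_sq_le_of_ae_abs_le {B : ℝ} (hg : MemLp g 2 μ)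
    (hfg : ∀ᵐ a ∂μ, |f a| ≤ B * |g a|) :
    ∫ a, f a ^ 2 ∂μ ≤ B ^ 2 * ∫ a, g a ^ 2 ∂μ := by
  rw [← integral_const_mul]
  refine integral_mono_of_nonneg (ae_of_all _ fun _ => sq_nonneg _)
    (hg.integrable_sq.const_mul _) ?_
  filter_upwards [hfg] with a ha
  simpa only [mul_pow, sq_abs] using pow_le_pow_left₀ (abs_nonneg _) ha 2

lemma setLIntegral_ofReal_le_ofReal_integral {s : Set α} (hs : MeasurableSet s)
    (hg : Integrable g μ) (hg0 : 0 ≤ g) (hfg : ∀ a ∈ s, f a ≤ g a) :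
    ∫⁻ a in s, ENNReal.ofReal (f a) ∂μ ≤ ENNReal.ofReal (∫ a, g a ∂μ) :=
  calc ∫⁻ a in s, ENNReal.ofReal (f a) ∂μ ≤ ∫⁻ a in s, ENNReal.ofReal (g a) ∂μ :=
        setLIntegral_mono' hs fun a ha => ENNReal.ofReal_le_ofReal (hfg a ha)
    _ ≤ ∫⁻ a, ENNReal.ofReal (g a) ∂μ := setLIntegral_le_lintegral _ _
    _ = ENNReal.ofReal (∫ a, g a ∂μ) :=
        (ofReal_integral_eq_lintegral_ofReal hg (ae_of_all _ hg0)).symm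

end SquareIntegrable

section TiltedHeatKernel

/-- The exponentially tilted heat kernel `e^{ρw} (4πt)^{-1/2} e^{-w²/(4t)}` on the line. -/
noncomputable def tiltedHeatKernel (ρ t w : ℝ) : ℝ :=
  exp (ρ * w) * ((√(4 * π * t))⁻¹ * exp (-w ^ 2 / (4 * t)))

variable {ρ t : ℝ}

-- Completing the square: the product is a Gaussian in `z` centred at `2ρt - (a + b)/2`.
lemma tiltedHeatKernel_mul (ht : 0 < t) (a b z : ℝ) :
    tiltedHeatKernel ρ t (a + z) * tiltedHeatKernel ρ t (b + z) =
      (4 * π * t)⁻¹ * exp (2 * ρ ^ 2 * t) * exp (-(a - b) ^ 2 / (8 * t)) *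
        exp (-(1 / (2 * t)) * (z + ((a + b) / 2 - 2 * ρ * t)) ^ 2) := by
  have hsqrt : (√(4 * π * t))⁻¹ * (√(4 * π * t))⁻¹ = (4 * π * t)⁻¹ := by
    rw [← mul_inv, mul_self_sqrt (by positivity)]
  calc tiltedHeatKernel ρ t (a + z) * tiltedHeatKernel ρ t (b + z)
      = (4 * π * t)⁻¹ * exp (ρ * (a + z) + -(a + z) ^ 2 / (4 * t) +
          (ρ * (b + z) + -(b + z) ^ 2 / (4 * t))) := by
        simp only [tiltedHeatKernel, exp_add, ← hsqrt]; ring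
    _ = (4 * π * t)⁻¹ * exp (2 * ρ ^ 2 * t + -(a - b) ^ 2 / (8 * t) +
          -(1 / (2 * t)) * (z + ((a + b) / 2 - 2 * ρ * t)) ^ 2) := by
        congr 2; field_simp; ring
    _ = _ := by simp only [exp_add]; ring

lemma integrable_tiltedHeatKernel_mul (ht : 0 < t) (a b : ℝ) :
    Integrable fun z => tiltedHeatKernel ρ t (a + z) * tiltedHeatKernel ρ t (b + z) := by
  simp_rw [tiltedHeatKernel_mul ht a b]
  exact ((integrable_exp_neg_mul_sq (by positivity)).comp_add_right _).const_mul _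

lemma integral_tiltedHeatKernel_mul (ht : 0 < t) (a b : ℝ) :
    ∫ z, tiltedHeatKernel ρ t (a + z) * tiltedHeatKernel ρ t (b + z) =
      exp (2 * ρ ^ 2 * t) * (√(8 * π * t))⁻¹ * exp (-(a - b) ^ 2 / (8 * t)) := by
  have hconst : (4 * π * t)⁻¹ * √(2 * π * t) = (√(8 * π * t))⁻¹ := by
    have h8 : √(8 * π * t) = 2 * √(2 * π * t) := by
      rw [show 8 * π * t = 2 ^ 2 * (2 * π * t) by ring, sqrt_mul (by positivity),
        sqrt_sq (by positivity)]
    have hsq : √(2 * π * t) ^ 2 = 2 * π * t := sq_sqrt (by positivity)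
    rw [h8, inv_mul_eq_iff_eq_mul₀ (by positivity), ← div_eq_mul_inv,
      eq_div_iff (by positivity)]
    linear_combination 2 * hsq
  simp_rw [tiltedHeatKernel_mul ht a b]
  rw [integral_const_mul, integral_add_right_eq_self fun z => exp (-(1 / (2 * t)) * z ^ 2),
    integral_gaussian, show π / (1 / (2 * t)) = 2 * π * t by field_simp, ← hconst]
  ring

lemma memLp_tiltedHeatKernel (ht : 0 < t) (a : ℝ) :
    MemLp (fun z => tiltedHeatKernel ρ t (a + z)) 2 := by
  refine (memLp_two_iff_integrable_sq ?_).mpr ?_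
  · unfold tiltedHeatKernel
    fun_prop
  · simpa only [sq] using integrable_tiltedHeatKernel_mul ht a a

lemma integrable_sq_tiltedHeatKernel_sub (ht : 0 < t) (α β a b : ℝ) :
    Integrable fun z =>
      (α * tiltedHeatKernel ρ t (a + z) - β * tiltedHeatKernel ρ t (b + z)) ^ 2 :=
  (((memLp_tiltedHeatKernel ht a).const_mul α).sub
    ((memLp_tiltedHeatKernel ht b).const_mul β)).integrable_sq

lemma integral_sq_tiltedHeatKernel_sub (ht : 0 < t) (α β a b : ℝ) :
    ∫ z, (α * tiltedHeatKernel ρ t (a + z) - β * tiltedHeatKernel ρ t (b + z)) ^ 2 =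
      exp (2 * ρ ^ 2 * t) * (√(8 * π * t))⁻¹ *
        ((α - β) ^ 2 + 2 * α * β * (1 - exp (-((a - b) ^ 2 / (8 * t))))) := by
  have haa := (integrable_tiltedHeatKernel_mul (ρ := ρ) ht a a).const_mul (α ^ 2)
  have hab := (integrable_tiltedHeatKernel_mul (ρ := ρ) ht a b).const_mul (2 * α * β)
  have hbb := (integrable_tiltedHeatKernel_mul (ρ := ρ) ht b b).const_mul (β ^ 2)
  calc _ = ∫ z, α ^ 2 * (tiltedHeatKernel ρ t (a + z) * tiltedHeatKernel ρ t (a + z)) +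
          β ^ 2 * (tiltedHeatKernel ρ t (b + z) * tiltedHeatKernel ρ t (b + z)) -
          2 * α * β * (tiltedHeatKernel ρ t (a + z) * tiltedHeatKernel ρ t (b + z)) := by
        congr 1 with z; ring
    _ = _ := by
      rw [integral_sub (haa.fun_add hbb) hab, integral_add haa hbb]
      simp only [integral_const_mul, integral_tiltedHeatKernel_mul ht, sub_self, neg_div]
      norm_num
      ring

lemma integral_sq_tiltedHeatKernel_sub_le {α β θ : ℝ} (ht : 0 < t) (hα : 0 ≤ α) (hα1 : α ≤ 1)
    (hβ : 0 ≤ β) (hβ1 : β ≤ 1) (hθ : 0 ≤ θ) (hθ1 : θ ≤ 1) (a b : ℝ) :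
    ∫ z, (α * tiltedHeatKernel ρ t (a + z) - β * tiltedHeatKernel ρ t (b + z)) ^ 2 ≤
      exp (2 * ρ ^ 2 * t) * (√t)⁻¹ * ((α - β) ^ 2 + 2 * ((a - b) ^ 2 / t) ^ θ) := by
  have hsqrt : √t ≤ √(8 * π * t) := sqrt_le_sqrt (by nlinarith [pi_gt_three])
  have hexp_nonneg : 0 ≤ 1 - exp (-((a - b) ^ 2 / (8 * t))) := by
    rw [sub_nonneg, exp_le_one_iff, neg_nonpos]; positivity
  have hexp : 1 - exp (-((a - b) ^ 2 / (8 * t))) ≤ ((a - b) ^ 2 / t) ^ θ := by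
    refine (one_sub_exp_neg_le_rpow (by positivity) hθ hθ1).trans ?_
    gcongr
    linarith
  have hαβ : α * β ≤ 1 := mul_le_one₀ hα1 hβ hβ1
  rw [integral_sq_tiltedHeatKernel_sub ht, mul_assoc 2 α β]
  gcongr
  linarith

end TiltedHeatKernel

section WeightedDirichletKernel

variable {r t x y z θ : ℝ}

lemma Gr_zero_time (r x z : ℝ) : Gr r 0 x z = 0 := by simp [Gr, G]

lemma Gr_zero_left (r t z : ℝ) : Gr r t 0 z = 0 := by simp [Gr, G]

lemma measurable_Gr (r s x : ℝ) : Measurable fun q : ℝ × ℝ => Gr r (s - q.1) x q.2 := by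
  unfold Gr G
  fun_prop

/-- The reflected part `e^{-r(x-z)} (4πt)^{-1/2} e^{-(x+z)²/(4t)}` of `Gr r t x z`, without the
factor `e^{-2r⁻z}`. On the half-line both that factor and `e^{-2r⁺x}` are at most `1`. -/
noncomputable def reflectedKernel (r t x z : ℝ) : ℝ :=
  exp (-(2 * r⁺ * x)) * tiltedHeatKernel |r| t (x + z)

lemma Gr_eq_tiltedHeatKernel_sub_reflectedKernel (r t x z : ℝ) :
    Gr r t x z =
      tiltedHeatKernel r t (-x + z) - exp (-(2 * r⁻ * z)) * reflectedKernel r t x z := by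
  have htilt : exp (-r * (x - z)) =
      exp (-(2 * r⁻ * z)) * (exp (-(2 * r⁺ * x)) * exp (|r| * (x + z))) := by
    rw [← exp_add, ← exp_add]
    congr 1
    linear_combination (x + z) * posPart_add_negPart r + (x - z) * posPart_sub_negPart r
  simp only [Gr, G, reflectedKernel, tiltedHeatKernel]
  rw [show r * (-x + z) = -r * (x - z) by ring, show (-x + z) ^ 2 = (x - z) ^ 2 by ring]
  linear_combination (-(√(4 * π * t))⁻¹ * exp (-(x + z) ^ 2 / (4 * t))) * htilt

lemma sq_Gr_sub_le (r t x y : ℝ) (hz : 0 ≤ z) :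
    (Gr r t y z - Gr r t x z) ^ 2 ≤
      2 * ((tiltedHeatKernel r t (-y + z) - tiltedHeatKernel r t (-x + z)) ^ 2 +
        (reflectedKernel r t y z - reflectedKernel r t x z) ^ 2) := by
  have hfactor : exp (-(2 * r⁻ * z)) ≤ 1 := by
    rw [exp_le_one_iff, neg_nonpos]; positivity
  simp only [Gr_eq_tiltedHeatKernel_sub_reflectedKernel]
  set A := tiltedHeatKernel r t (-y + z) - tiltedHeatKernel r t (-x + z)
  set B := reflectedKernel r t y z - reflectedKernel r t x z
  calc _ = (A + -(exp (-(2 * r⁻ * z)) * B)) ^ 2 := by ring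
    _ ≤ 2 * (A ^ 2 + (-(exp (-(2 * r⁻ * z)) * B)) ^ 2) := add_sq_le
    _ ≤ 2 * (A ^ 2 + B ^ 2) := by
      rw [neg_sq, mul_pow]
      gcongr
      exact mul_le_of_le_one_left (sq_nonneg _) (pow_le_one₀ (exp_pos _).le hfactor)

lemma sq_exp_neg_posPart_sub_le (ht : 0 < t) (hθ : 0 ≤ θ) (hθ1 : θ ≤ 1) (hx : 0 ≤ x)
    (hy : 0 ≤ y) :
    (exp (-(2 * r⁺ * y)) - exp (-(2 * r⁺ * x))) ^ 2 ≤
      (4 * r ^ 2 * t) ^ θ * ((x - y) ^ 2 / t) ^ θ := by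
  have hpos : r⁺ ≤ |r| := by linarith [posPart_add_negPart r, negPart_nonneg r]
  calc (exp (-(2 * r⁺ * y)) - exp (-(2 * r⁺ * x))) ^ 2
      ≤ (|2 * r⁺ * y - 2 * r⁺ * x| ^ θ) ^ 2 := by
        rw [← sq_abs]
        gcongr
        exact abs_exp_neg_sub_exp_neg_le_rpow (by positivity) (by positivity) hθ hθ1
    _ = (4 * r⁺ ^ 2 * (x - y) ^ 2) ^ θ := by
        rw [rpow_pow_comm (abs_nonneg _), sq_abs]; ring_nf
    _ ≤ (4 * |r| ^ 2 * (x - y) ^ 2) ^ θ := by gcongr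
    _ = (4 * r ^ 2 * t) ^ θ * ((x - y) ^ 2 / t) ^ θ := by
        rw [← mul_rpow (by positivity) (by positivity), sq_abs]
        congr 1
        field_simp

lemma integrable_sq_reflectedKernel_sub (r : ℝ) (ht : 0 < t) (x y : ℝ) :
    Integrable fun z => (reflectedKernel r t y z - reflectedKernel r t x z) ^ 2 :=
  integrable_sq_tiltedHeatKernel_sub ht _ _ _ _

lemma integral_sq_reflectedKernel_sub_le (r : ℝ) (ht : 0 < t) (hθ : 0 ≤ θ) (hθ1 : θ ≤ 1)
    (hx : 0 ≤ x) (hy : 0 ≤ y) :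
    ∫ z, (reflectedKernel r t y z - reflectedKernel r t x z) ^ 2 ≤
      exp (2 * r ^ 2 * t) * (√t)⁻¹ * ((2 + (4 * r ^ 2 * t) ^ θ) * ((x - y) ^ 2 / t) ^ θ) := by
  have hfactor (w : ℝ) (hw : 0 ≤ w) : exp (-(2 * r⁺ * w)) ≤ 1 := by
    rw [exp_le_one_iff, neg_nonpos]; positivity
  refine (integral_sq_tiltedHeatKernel_sub_le ht (exp_pos _).le (hfactor y hy)
    (exp_pos _).le (hfactor x hx) hθ hθ1 y x).trans ?_
  rw [sq_abs, sub_sq_comm y x]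
  gcongr
  linarith [sq_exp_neg_posPart_sub_le (r := r) ht hθ hθ1 hx hy]

/-- Constant in the spatial `L²` modulus of continuity of `Gr r t`, uniform over `t ≤ T`. -/
noncomputable def spatialConst (r T θ : ℝ) : ℝ :=
  2 * exp (2 * r ^ 2 * T) * (4 + (4 * r ^ 2 * T) ^ θ)

lemma spatialConst_pos (r : ℝ) {T : ℝ} (hT : 0 ≤ T) (θ : ℝ) : 0 < spatialConst r T θ := by
  unfold spatialConst; positivity

lemma spatialConst_le_spatialConst (r : ℝ) {T : ℝ} (ht : 0 ≤ t) (htT : t ≤ T) (hθ : 0 ≤ θ) :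
    spatialConst r t θ ≤ spatialConst r T θ := by
  unfold spatialConst; gcongr

lemma lintegral_sq_Gr_sub_le (r : ℝ) (ht : 0 < t) (hθ : 0 ≤ θ) (hθ1 : θ ≤ 1) (hx : 0 ≤ x)
    (hy : 0 ≤ y) :
    ∫⁻ z in Ioi 0, ENNReal.ofReal ((Gr r t y z - Gr r t x z) ^ 2) ≤
      ENNReal.ofReal (spatialConst r t θ * |x - y| ^ (2 * θ) * t ^ (-(1 / 2) - θ)) := by
  have hdirect_int :
      Integrable fun z => (tiltedHeatKernel r t (-y + z) - tiltedHeatKernel r t (-x + z)) ^ 2 := by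
    simpa only [one_mul] using integrable_sq_tiltedHeatKernel_sub ht 1 1 (-y) (-x)
  have hdirect : ∫ z, (tiltedHeatKernel r t (-y + z) - tiltedHeatKernel r t (-x + z)) ^ 2 ≤
      exp (2 * r ^ 2 * t) * (√t)⁻¹ * (2 * ((x - y) ^ 2 / t) ^ θ) := by
    simpa [add_comm, sub_eq_add_neg] using integral_sq_tiltedHeatKernel_sub_le (ρ := r) ht
      zero_le_one le_rfl zero_le_one le_rfl hθ hθ1 (-y) (-x)
  have hreflected_int := integrable_sq_reflectedKernel_sub r ht x y
  have hreflected := integral_sq_reflectedKernel_sub_le r ht hθ hθ1 hx hy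
  have hscaling : |x - y| ^ (2 * θ) * t ^ (-(1 / 2) - θ) = (√t)⁻¹ * ((x - y) ^ 2 / t) ^ θ := by
    rw [div_rpow (sq_nonneg _) ht.le, rpow_sub ht, rpow_neg ht.le, ← sqrt_eq_rpow,
      rpow_mul (abs_nonneg _), rpow_two, sq_abs]
    ring
  refine (setLIntegral_ofReal_le_ofReal_integral measurableSet_Ioi
    ((hdirect_int.fun_add hreflected_int).const_mul 2) (fun z => by positivity)
    fun z hz => sq_Gr_sub_le r t x y (le_of_lt hz)).trans (ENNReal.ofReal_le_ofReal ?_)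
  rw [integral_const_mul, integral_add hdirect_int hreflected_int, mul_assoc, hscaling,
    spatialConst]
  linear_combination 2 * hdirect + 2 * hreflected

end WeightedDirichletKernel

section SpaceTime

variable {r s T x y θ : ℝ}

/-- The space-time domain `(0, T] × (0, ∞)`. -/
abbrev spaceTime (T : ℝ) : Set (ℝ × ℝ) := Ioc 0 T ×ˢ Ioi 0

lemma measurableSet_spaceTime (T : ℝ) : MeasurableSet (spaceTime T) :=
  measurableSet_Ioc.prod measurableSet_Ioi

lemma spaceTime_subset_spaceTime (hsT : s ≤ T) : spaceTime s ⊆ spaceTime T :=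
  prod_mono (Ioc_subset_Ioc_right hsT) subset_rfl

lemma integrableOn_sub_rpow {β : ℝ} (hs : 0 ≤ s) (hβ : -1 < β) :
    IntegrableOn (fun τ => (s - τ) ^ β) (Ioc 0 s) := by
  have h := (intervalIntegral.intervalIntegrable_rpow' (a := 0) (b := s) hβ).comp_sub_left s
  simp only [sub_zero, sub_self] at h
  exact (intervalIntegrable_iff_integrableOn_Ioc_of_le hs).mp h.symm

lemma integral_sub_rpow {β : ℝ} (hs : 0 ≤ s) (hβ : -1 < β) :
    ∫ τ in Ioc 0 s, (s - τ) ^ β = s ^ (β + 1) / (β + 1) := by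
  rw [← intervalIntegral.integral_of_le hs,
    intervalIntegral.integral_comp_sub_left (fun v => v ^ β), sub_self, sub_zero,
    integral_rpow (Or.inl hβ), zero_rpow (by linarith), sub_zero]

/-- Constant in the space-time `L²` modulus of continuity of `Gr r`, for the horizon `T`. -/
noncomputable def spaceTimeConst (r T θ : ℝ) : ℝ :=
  spatialConst r T θ * (T ^ (1 / 2 - θ) / (1 / 2 - θ))

lemma spaceTimeConst_nonneg (r : ℝ) (hT : 0 ≤ T) (hθ2 : θ < 1 / 2) : 0 ≤ spaceTimeConst r T θ :=
  mul_nonneg (spatialConst_pos r hT θ).le (div_nonneg (rpow_nonneg hT _) (sub_pos.mpr hθ2).le)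

lemma spaceTimeConst_pos (r : ℝ) (hT : 0 < T) (hθ2 : θ < 1 / 2) : 0 < spaceTimeConst r T θ :=
  mul_pos (spatialConst_pos r hT.le θ) (div_pos (rpow_pos_of_pos hT _) (sub_pos.mpr hθ2))

lemma spaceTimeConst_le_spaceTimeConst (r : ℝ) (hs : 0 ≤ s) (hsT : s ≤ T) (hθ : 0 ≤ θ)
    (hθ2 : θ < 1 / 2) : spaceTimeConst r s θ ≤ spaceTimeConst r T θ := by
  have hexponent : 0 ≤ 1 / 2 - θ := (sub_pos.mpr hθ2).le
  exact mul_le_mul (spatialConst_le_spatialConst r hs hsT hθ)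
    (div_le_div_of_nonneg_right (rpow_le_rpow hs hsT hexponent) hexponent)
    (div_nonneg (rpow_nonneg hs _) hexponent) (spatialConst_pos r (hs.trans hsT) θ).le

lemma lintegral_spaceTime_sq_Gr_sub_le (r : ℝ) (hs : 0 ≤ s) (hθ : 0 ≤ θ) (hθ2 : θ < 1 / 2)
    (hx : 0 ≤ x) (hy : 0 ≤ y) :
    ∫⁻ q in spaceTime s, ENNReal.ofReal ((Gr r (s - q.1) y q.2 - Gr r (s - q.1) x q.2) ^ 2) ≤
      ENNReal.ofReal (spaceTimeConst r s θ * |x - y| ^ (2 * θ)) := by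
  have hβ : -1 < -(1 / 2) - θ := by linarith
  have hK := (spatialConst_pos r hs θ).le
  calc _ ≤ ∫⁻ τ in Ioc 0 s, ∫⁻ z in Ioi 0,
        ENNReal.ofReal ((Gr r (s - τ) y z - Gr r (s - τ) x z) ^ 2) := by
        rw [Measure.volume_eq_prod, ← Measure.prod_restrict]
        exact lintegral_prod_le _
    _ ≤ ∫⁻ τ in Ioc 0 s, ENNReal.ofReal
        (spatialConst r s θ * |x - y| ^ (2 * θ) * (s - τ) ^ (-(1 / 2) - θ)) := by
        refine setLIntegral_mono' measurableSet_Ioc fun τ hτ => ?_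
        rcases hτ.2.eq_or_lt with rfl | hlt
        · simp [Gr_zero_time]
        · refine (lintegral_sq_Gr_sub_le r (sub_pos.mpr hlt) hθ (by linarith) hx hy).trans
            (ENNReal.ofReal_le_ofReal ?_)
          have ht : 0 ≤ s - τ := sub_nonneg.mpr hτ.2
          gcongr
          exact spatialConst_le_spatialConst r ht (by linarith [hτ.1]) hθ
    _ = ENNReal.ofReal (∫ τ in Ioc 0 s,
        spatialConst r s θ * |x - y| ^ (2 * θ) * (s - τ) ^ (-(1 / 2) - θ)) := by
        refine (ofReal_integral_eq_lintegral_ofReal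
          ((integrableOn_sub_rpow hs hβ).const_mul _) ?_).symm
        filter_upwards [ae_restrict_mem measurableSet_Ioc] with τ hτ
        have ht : 0 ≤ s - τ := sub_nonneg.mpr hτ.2
        simp only [Pi.zero_apply]
        positivity
    _ = _ := by
        rw [integral_const_mul, integral_sub_rpow hs hβ,
          show -(1 / 2) - θ + 1 = 1 / 2 - θ by ring, spaceTimeConst, mul_right_comm]

lemma memLp_Gr_sub (r : ℝ) (hs : 0 ≤ s) (hx : 0 ≤ x) (hy : 0 ≤ y) :
    MemLp (fun q : ℝ × ℝ => Gr r (s - q.1) y q.2 - Gr r (s - q.1) x q.2) 2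
      (volume.restrict (spaceTime s)) :=
  memLp_two_of_lintegral_ofReal_sq_lt_top
    ((measurable_Gr r s y).sub (measurable_Gr r s x)).aestronglyMeasurable
    ((lintegral_spaceTime_sq_Gr_sub_le r hs le_rfl (by norm_num) hx hy).trans_lt
      ENNReal.ofReal_lt_top)

-- `Gr` vanishes at the boundary point `0`, so this is a special case of the increment estimate.
lemma memLp_Gr (r : ℝ) (hs : 0 ≤ s) (hx : 0 ≤ x) :
    MemLp (fun q : ℝ × ℝ => Gr r (s - q.1) x q.2) 2 (volume.restrict (spaceTime s)) := by
  simpa [Gr_zero_left] using memLp_Gr_sub r hs le_rfl hx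

lemma integral_spaceTime_sq_Gr_sub_le (r : ℝ) (hs : s ∈ Icc 0 T) (hθ : 0 ≤ θ) (hθ2 : θ < 1 / 2)
    (hx : 0 ≤ x) (hy : 0 ≤ y) :
    ∫ q in spaceTime s, (Gr r (s - q.1) y q.2 - Gr r (s - q.1) x q.2) ^ 2 ≤
      spaceTimeConst r T θ * |x - y| ^ (2 * θ) := by
  have hle : spaceTimeConst r s θ * |x - y| ^ (2 * θ) ≤
      spaceTimeConst r T θ * |x - y| ^ (2 * θ) := by
    gcongr
    exact spaceTimeConst_le_spaceTimeConst r hs.1 hs.2 hθ hθ2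
  rw [integral_eq_lintegral_of_nonneg_ae (ae_of_all _ fun _ => sq_nonneg _)
    (memLp_Gr_sub r hs.1 hx hy).integrable_sq.aestronglyMeasurable]
  have hT := spaceTimeConst_nonneg r (hs.1.trans hs.2) hθ2
  exact ENNReal.toReal_le_of_le_ofReal (by positivity)
    ((lintegral_spaceTime_sq_Gr_sub_le r hs.1 hθ hθ2 hx hy).trans (ENNReal.ofReal_le_ofReal hle))

end SpaceTime

section WeightedConvolution

variable {r s T x y θ : ℝ} {f : ℝ → ℝ → ℝ}

/-- The space-time convolution `(s, x) ↦ ∫₀ˢ ∫₀^∞ G(s - τ, x, z) f(τ, z) dz dτ`; the function `F`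
of the theorem is the case `f(τ, z) = σ(z, u(τ, z)) h(τ, z)`. -/
noncomputable def heatConvolution (f : ℝ → ℝ → ℝ) (s x : ℝ) : ℝ :=
  ∫ τ in Ioc 0 s, ∫ z in Ioi 0, G (s - τ) x z * f τ z

lemma exp_mul_heatConvolution (hs : 0 ≤ s) (hx : 0 ≤ x)
    (hf : MemLp (fun q : ℝ × ℝ => exp (-r * q.2) * f q.1 q.2) 2 (volume.restrict (spaceTime s))) :
    exp (-r * x) * heatConvolution f s x =
      ∫ q in spaceTime s, Gr r (s - q.1) x q.2 * (exp (-r * q.2) * f q.1 q.2) := by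
  have hint : IntegrableOn
      (fun q => Gr r (s - q.1) x q.2 * (exp (-r * q.2) * f q.1 q.2)) (spaceTime s) :=
    (memLp_Gr r hs hx).integrable_mul hf
  rw [Measure.volume_eq_prod] at hint ⊢
  rw [setIntegral_prod _ hint, heatConvolution]
  simp only [← integral_const_mul]
  congr 1 with τ
  congr 1 with z
  have hexp : exp (-r * x) = exp (-r * (x - z)) * exp (-r * z) := by
    rw [← exp_add]; ring_nf
  rw [hexp, Gr]
  ring

lemma sq_exp_mul_heatConvolution_sub_le (hs : s ∈ Icc 0 T) (hθ : 0 ≤ θ) (hθ2 : θ < 1 / 2)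
    (hx : 0 ≤ x) (hy : 0 ≤ y)
    (hf : MemLp (fun q : ℝ × ℝ => exp (-r * q.2) * f q.1 q.2) 2 (volume.restrict (spaceTime T))) :
    (exp (-r * y) * heatConvolution f s y - exp (-r * x) * heatConvolution f s x) ^ 2 ≤
      spaceTimeConst r T θ * |x - y| ^ (2 * θ) *
        ∫ q in spaceTime T, (exp (-r * q.2) * f q.1 q.2) ^ 2 := by
  have hsub := spaceTime_subset_spaceTime hs.2
  have hfs := hf.mono_measure (Measure.restrict_mono_set volume hsub)
  have hincrement : exp (-r * y) * heatConvolution f s y - exp (-r * x) * heatConvolution f s x =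
      ∫ q in spaceTime s, (Gr r (s - q.1) y q.2 - Gr r (s - q.1) x q.2) *
        (exp (-r * q.2) * f q.1 q.2) := by
    rw [exp_mul_heatConvolution hs.1 hy hfs, exp_mul_heatConvolution hs.1 hx hfs]
    simp only [sub_mul]
    exact (integral_sub ((memLp_Gr r hs.1 hy).integrable_mul hfs)
      ((memLp_Gr r hs.1 hx).integrable_mul hfs)).symm
  rw [hincrement]
  have hK := spaceTimeConst_nonneg r (hs.1.trans hs.2) hθ2
  exact (sq_integral_mul_le_integral_sq_mul_integral_sq (memLp_Gr_sub r hs.1 hx hy) hfs).trans <|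
    mul_le_mul (integral_spaceTime_sq_Gr_sub_le r hs hθ hθ2 hx hy)
      (setIntegral_mono_set hf.integrable_sq (ae_of_all _ fun _ => sq_nonneg _) hsub.eventuallyLE)
      (integral_nonneg fun _ => sq_nonneg _) (by positivity)

lemma abs_exp_mul_heatConvolution_sub_le {L : ℝ} (hs : s ∈ Icc 0 T) (hθ : 0 ≤ θ)
    (hθ2 : θ < 1 / 2) (hx : 0 ≤ x) (hy : 0 ≤ y)
    (hf : MemLp (fun q : ℝ × ℝ => exp (-r * q.2) * f q.1 q.2) 2 (volume.restrict (spaceTime T)))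
    (hL : 0 ≤ L) (hfL : ∫ q in spaceTime T, (exp (-r * q.2) * f q.1 q.2) ^ 2 ≤ L ^ 2) :
    |exp (-r * y) * heatConvolution f s y - exp (-r * x) * heatConvolution f s x| ≤
      √(spaceTimeConst r T θ) * L * |x - y| ^ θ := by
  have hK := spaceTimeConst_nonneg r (hs.1.trans hs.2) hθ2
  refine abs_le_of_sq_le_sq ?_ (by positivity)
  calc _ ≤ spaceTimeConst r T θ * |x - y| ^ (2 * θ) *
        ∫ q in spaceTime T, (exp (-r * q.2) * f q.1 q.2) ^ 2 :=
        sq_exp_mul_heatConvolution_sub_le hs hθ hθ2 hx hy hf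
    _ ≤ spaceTimeConst r T θ * |x - y| ^ (2 * θ) * L ^ 2 := by gcongr
    _ = (√(spaceTimeConst r T θ) * L * |x - y| ^ θ) ^ 2 := by
        rw [mul_pow, mul_pow, sq_sqrt hK, mul_comm 2 θ, rpow_mul (abs_nonneg _), rpow_two]
        ring

end WeightedConvolution

section Source

variable {r R T N t z : ℝ} {σ u h : ℝ → ℝ → ℝ}

lemma CrNorm_nonneg (r T : ℝ) (u : ℝ → ℝ → ℝ) : 0 ≤ CrNorm r T u := by
  refine Real.sSup_nonneg ?_
  rintro _ ⟨q, -, rfl⟩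
  positivity

lemma exp_mul_abs_le_CrNorm (hu : CrBdd r T u) (ht : t ∈ Icc 0 T) (hz : 0 ≤ z) :
    exp (-r * z) * |u t z| ≤ CrNorm r T u :=
  le_csSup hu ⟨(t, z), ⟨ht, hz⟩, rfl⟩

lemma exp_mul_abs_source_le (hR : 0 ≤ R)
    (hσ : ∀ x ≥ (0 : ℝ), ∀ v : ℝ, |σ x v| ≤ R * (exp (r * x) + |v|)) (hu : CrBdd r T u)
    (ht : t ∈ Icc 0 T) (hz : 0 ≤ z) :
    exp (-r * z) * |σ z (u t z)| ≤ R * (1 + CrNorm r T u) :=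
  calc exp (-r * z) * |σ z (u t z)|
      ≤ exp (-r * z) * (R * (exp (r * z) + |u t z|)) := by gcongr; exact hσ z hz _
    _ = R * (1 + exp (-r * z) * |u t z|) := by
        have hcancel : exp (-r * z) * exp (r * z) = 1 := by rw [← exp_add]; simp
        linear_combination R * hcancel
    _ ≤ R * (1 + CrNorm r T u) := by gcongr; exact exp_mul_abs_le_CrNorm hu ht hz

lemma ae_abs_exp_mul_source_mul_le (hR : 0 ≤ R)
    (hσ : ∀ x ≥ (0 : ℝ), ∀ v : ℝ, |σ x v| ≤ R * (exp (r * x) + |v|)) (hu : CrBdd r T u)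
    (h : ℝ → ℝ → ℝ) :
    ∀ᵐ q : ℝ × ℝ ∂volume.restrict (spaceTime T),
      |exp (-r * q.2) * (σ q.2 (u q.1 q.2) * h q.1 q.2)| ≤
        R * (1 + CrNorm r T u) * |h q.1 q.2| := by
  filter_upwards [ae_restrict_mem (measurableSet_spaceTime T)] with q hq
  rw [← mul_assoc, abs_mul, abs_mul, abs_exp]
  exact mul_le_mul_of_nonneg_right
    (exp_mul_abs_source_le hR hσ hu (Ioc_subset_Icc_self hq.1) (le_of_lt hq.2)) (abs_nonneg _)

lemma memLp_exp_mul_source_mul (hR : 0 ≤ R) (hσm : Measurable (Function.uncurry σ))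
    (hσ : ∀ x ≥ (0 : ℝ), ∀ v : ℝ, |σ x v| ≤ R * (exp (r * x) + |v|))
    (hum : AEMeasurable (Function.uncurry u) (volume.restrict (spaceTime T)))
    (hu : CrBdd r T u) (hh : MemLp (Function.uncurry h) 2 (volume.restrict (spaceTime T))) :
    MemLp (fun q : ℝ × ℝ => exp (-r * q.2) * (σ q.2 (u q.1 q.2) * h q.1 q.2)) 2
      (volume.restrict (spaceTime T)) := by
  have hσu : AEMeasurable (fun q : ℝ × ℝ => σ q.2 (u q.1 q.2)) (volume.restrict (spaceTime T)) :=
    hσm.comp_aemeasurable (measurable_snd.aemeasurable.prodMk hum)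
  have hexp : Measurable fun q : ℝ × ℝ => exp (-r * q.2) := by fun_prop
  exact hh.of_le_mul
    (hexp.aemeasurable.mul (hσu.mul hh.aestronglyMeasurable.aemeasurable)).aestronglyMeasurable
    (ae_abs_exp_mul_source_mul_le hR hσ hu h)

lemma integral_sq_exp_mul_source_mul_le (hR : 0 ≤ R)
    (hσ : ∀ x ≥ (0 : ℝ), ∀ v : ℝ, |σ x v| ≤ R * (exp (r * x) + |v|)) (hu : CrBdd r T u)
    (hh : MemLp (Function.uncurry h) 2 (volume.restrict (spaceTime T)))
    (hhN : ∫ q in spaceTime T, h q.1 q.2 ^ 2 ≤ N ^ 2) :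
    ∫ q in spaceTime T, (exp (-r * q.2) * (σ q.2 (u q.1 q.2) * h q.1 q.2)) ^ 2 ≤
      (R * (1 + CrNorm r T u) * N) ^ 2 := by
  rw [mul_pow _ N]
  exact (integral_sq_le_of_ae_abs_le hh (ae_abs_exp_mul_source_mul_le hR hσ hu h)).trans
    (mul_le_mul_of_nonneg_left hhN (sq_nonneg _))

end Source

theorem stmt_14_general (r T p : ℝ) (hT : 0 < T) (hp : 4 ≤ p) :
    ∃ C > (0 : ℝ), ∀ R N : ℝ, 0 ≤ R → 0 ≤ N →
      ∀ σ : ℝ → ℝ → ℝ,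
        Measurable (Function.uncurry σ) →
        (∀ x ≥ (0 : ℝ), ∀ v : ℝ, |σ x v| ≤ R * (exp (r * x) + |v|)) →
      ∀ u : ℝ → ℝ → ℝ,
        AEMeasurable (Function.uncurry u) (volume.restrict (spaceTime T)) → CrBdd r T u →
      ∀ h : ℝ → ℝ → ℝ,
        MemLp (Function.uncurry h) 2 (volume.restrict (spaceTime T)) →
        ∫ q in spaceTime T, h q.1 q.2 ^ 2 ≤ N ^ 2 →
      ∀ s ∈ Icc 0 T, ∀ x ≥ (0 : ℝ), ∀ y ≥ (0 : ℝ),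
        |exp (-r * y) *
              (∫ τ in Ioc 0 s, ∫ z in Ioi 0, G (s - τ) y z * σ z (u τ z) * h τ z) -
            exp (-r * x) *
              (∫ τ in Ioc 0 s, ∫ z in Ioi 0, G (s - τ) x z * σ z (u τ z) * h τ z)| ^ p
          ≤ C * R ^ p * N ^ p * T * (1 + CrNorm r T u) ^ p * |x - y| ^ ((p - 4) / 2) := by
  set θ := (p - 4) / (2 * p) with hθ_def
  have hθ : 0 ≤ θ := div_nonneg (by linarith) (by linarith)
  have hθ2 : θ < 1 / 2 := by rw [hθ_def, div_lt_div_iff₀] <;> linarith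
  have hθp : θ * p = (p - 4) / 2 := by rw [hθ_def]; field_simp
  have hK := spaceTimeConst_pos r hT hθ2
  refine ⟨√(spaceTimeConst r T θ) ^ p / T, by positivity, ?_⟩
  intro R N hR hN σ hσm hσ u hum hu h hh hhN s hs x hx y hy
  have hM := CrNorm_nonneg r T u
  have hbound := abs_exp_mul_heatConvolution_sub_le
    (f := fun τ z => σ z (u τ z) * h τ z) hs hθ hθ2 hx hy
    (memLp_exp_mul_source_mul hR hσm hσ hum hu hh)
    (mul_nonneg (mul_nonneg hR (by positivity)) hN)
    (integral_sq_exp_mul_source_mul_le hR hσ hu hh hhN)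
  simp only [heatConvolution, ← mul_assoc] at hbound
  refine (rpow_le_rpow (abs_nonneg _) hbound (by linarith)).trans_eq ?_
  rw [mul_rpow (by positivity) (by positivity), mul_rpow (by positivity) hN,
    mul_rpow (by positivity) (by positivity), mul_rpow (sqrt_nonneg _) hR,
    ← rpow_mul (abs_nonneg _), hθp]
  field_simp

/-- as in (4.13) of the paper: spatial Hölder continuity of the weighted
convolution `F`. -/
theorem stmt_14 (r T p : ℝ) (hT : 0 < T) (hp : 4 < p) :
    ∃ C > (0:ℝ), ∀ R N : ℝ, 0 < R → 1 ≤ N →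
      ∀ σ : ℝ → ℝ → ℝ,
        Measurable (Function.uncurry σ) →
        (∀ x ≥ (0:ℝ), ∀ u : ℝ, |σ x u| ≤ R * (Real.exp (r * x) + |u|)) →
      ∀ u : ℝ → ℝ → ℝ,
        ContinuousOn (Function.uncurry u) (Icc 0 T ×ˢ Ici 0) → CrBdd r T u →
      ∀ h : ℝ → ℝ → ℝ,
        Measurable (Function.uncurry h) →
        IntegrableOn (fun q : ℝ × ℝ => (h q.1 q.2) ^ 2) (Ioc 0 T ×ˢ Ioi 0) →
        (∫ q in (Ioc (0:ℝ) T ×ˢ Ioi (0:ℝ)), (h q.1 q.2) ^ 2) ≤ N ^ 2 →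
      ∀ s ∈ Icc (0:ℝ) T, ∀ x ≥ (0:ℝ), ∀ y ≥ (0:ℝ),
        |Real.exp (-r * y) *
              (∫ s' in Ioc (0:ℝ) s, ∫ z in Ioi (0:ℝ), G (s - s') y z * σ z (u s' z) * h s' z) -
            Real.exp (-r * x) *
              (∫ s' in Ioc (0:ℝ) s, ∫ z in Ioi (0:ℝ), G (s - s') x z * σ z (u s' z) * h s' z)| ^ p
          ≤ C * R ^ p * N ^ p * T * (1 + CrNorm r T u) ^ p * |x - y| ^ ((p - 4) / 2) := by
  obtain ⟨C, hC, hbound⟩ := stmt_14_general r T p hT hp.le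
  refine ⟨C, hC, fun R N hR hN σ hσm hσ u hum hu h hhm hh hhN => ?_⟩
  exact hbound R N hR.le (by linarith) σ hσm hσ u
    ((hum.mono (prod_mono Ioc_subset_Icc_self Ioi_subset_Ici_self)).aemeasurable
      (measurableSet_spaceTime T)) hu h
    ((memLp_two_iff_integrable_sq hhm.aestronglyMeasurable).mpr hh) hhN
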